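/- Consider the noise-free LTI system x_{t+1} = A x_t + B u_t with (A,B) controllable, i.e. rank [B, AB, …, A^{n_x−1}B] = n_x. Let (u^s_t)_{t=0}^{N−1} be an input sequence persistently exciting of order L + n_x, and let (x^s_t)_{t=0}^{N−1} be a corresponding state trajectory, i.e. x^s_{t+1} = A x^s_t + B u^s_t for 0 ≤ t ≤ N−2. Then the (n_u·L + n_x) × (N − L + 1) matrix obtained by stacking H_L(u^s) on top of the row of states [x^s_0, x^s_1, …, x^s_{N−L}] has full row rank n_u·L + n_x. -/

import Mathlib

/-- Block Hankel matrix with `L` block rows and `cols` columns built from the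
`ℝ^m`-valued sequence `z`: the `((i,a), j)` entry is `z (i + j) a`. -/
def hankel {m : ℕ} (L cols : ℕ) (z : ℕ → Fin m → ℝ) :
    Matrix (Fin L × Fin m) (Fin cols) ℝ :=
  Matrix.of fun p j => z ((p.1 : ℕ) + (j : ℕ)) p.2

/-- A sequence of length `N` is persistently exciting of order `L` if its block Hankel
matrix with `L` block rows has full row rank `m * L`. -/
def persistentlyExciting {m : ℕ} (N L : ℕ) (z : ℕ → Fin m → ℝ) : Prop :=
  (hankel L (N - L + 1) z).rank = m * L

/-- The controllability matrix `[B, AB, …, A^{n_x−1}B]`. -/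
def ctrbMat {nx nu : ℕ} (A : Matrix (Fin nx) (Fin nx) ℝ) (B : Matrix (Fin nx) (Fin nu) ℝ) :
    Matrix (Fin nx) (Fin nx × Fin nu) ℝ :=
  Matrix.of fun i p => (A ^ (p.1 : ℕ) * B) i p.2

/-!
A row vector `(η, ξ)` annihilating the stacked matrix is a relation `η(σ) u + ξ x = 0`, where `σ` is
the time shift and `η` is read as a vector of polynomials of degree less than `L`. Substituting the
dynamics, `k` shifts turn it into `ηₖ(σ) u + ξ Aᵏ x = 0` with `ηₖ₊₁ = X ηₖ + ξ Aᵏ B`. Let `p` be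
monic of degree `d` with `p(A) = 0`. Weighting the relations by the coefficients of `p` cancels the
state, so persistency of excitation of order `L + d` gives `∑ₖ pₖ ηₖ = 0`. If `η_d` were nonzero,
every `ηₖ` with `k < d` would have smaller degree, which is impossible because `p` is monic; so
`η_d = 0`. Its coefficients are those of `η` and the `ξ Aᵏ B` with `k < d`, so `η = 0`,
and `ξ = 0` by controllability.
-/

section GeneralSystem

open Matrix Polynomial

theorem linearIndependent_row_iff_vecMul_eq_zero {R m n : Type*} [Ring R] [Fintype m]
    {M : Matrix m n R} : LinearIndependent R M.row ↔ ∀ v, v ᵥ* M = 0 → v = 0 := by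
  rw [← Matrix.vecMul_injective_iff]
  exact injective_iff_map_eq_zero M.vecMulLinear

theorem rank_eq_iff_linearIndependent_row {K m n : Type*} [Field K] [Fintype m] [Fintype n]
    {M : Matrix m n K} {r : ℕ} (hr : Fintype.card m = r) :
    M.rank = r ↔ LinearIndependent K M.row := by
  rw [linearIndependent_iff_card_eq_finrank_span, Matrix.rank_eq_finrank_span_row, hr, eq_comm,
    Set.finrank]

section DivX

variable {R : Type*} [Semiring R] {e : ℕ → R[X]}

theorem monotone_degree_of_divX_succ (he : ∀ k, (e (k + 1)).divX = e k) :
    Monotone fun k => (e k).degree := by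
  refine monotone_nat_of_le_succ fun k => ?_
  rw [← he k]
  by_cases hk : e (k + 1) = 0
  · simp [hk]
  · exact (degree_divX_lt hk).le

theorem degree_lt_degree_of_divX_succ (he : ∀ k, (e (k + 1)).divX = e k) {k d : ℕ} (hkd : k < d)
    (hd : e d ≠ 0) : (e k).degree < (e d).degree := by
  obtain ⟨m, rfl⟩ := Nat.exists_eq_succ_of_ne_zero (Nat.ne_zero_of_lt hkd)
  calc (e k).degree ≤ (e m).degree := monotone_degree_of_divX_succ he (Nat.le_of_lt_succ hkd)
    _ = (e (m + 1)).divX.degree := by rw [he]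
    _ < (e (m + 1)).degree := degree_divX_lt hd

end DivX

theorem eq_zero_of_sum_coeff_smul_of_divX_succ {R : Type*} [Ring R] {e : ℕ → R[X]} {p : R[X]}
    (he : ∀ k, (e (k + 1)).divX = e k) (hp : p.Monic)
    (hsum : ∑ k ∈ Finset.range (p.natDegree + 1), p.coeff k • e k = 0) :
    ∀ k ≤ p.natDegree, e k = 0 := by
  suffices htop : e p.natDegree = 0 by
    intro k hk
    simpa [htop] using monotone_degree_of_divX_succ he hk
  by_contra htop
  have hlow : (∑ k ∈ Finset.range p.natDegree, p.coeff k • e k).degree <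
      (e p.natDegree).degree := by
    refine (degree_sum_le _ _).trans_lt
      ((Finset.sup_lt_iff (bot_lt_iff_ne_bot.mpr (degree_ne_bot.mpr htop))).mpr fun k hk => ?_)
    exact (degree_smul_le _ _).trans_lt
      (degree_lt_degree_of_divX_succ he (Finset.mem_range.mp hk) htop)
  rw [Finset.sum_range_succ, hp.coeff_natDegree, one_smul] at hsum
  rw [eq_neg_of_add_eq_zero_left hsum, degree_neg] at hlow
  exact hlow.false

variable {R n ι : Type*}

/-- The block Hankel matrix with `L` block rows and `cols` columns of a sequence `z` of vectors
indexed by `ι`. -/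
def blockHankel (L cols : ℕ) (z : ℕ → ι → R) : Matrix (Fin L × ι) (Fin cols) R :=
  Matrix.of fun p j => z (p.1 + j) p.2

/-- The block Hankel matrix with `L` block rows of the input `u`, stacked on top of the row of
states `[x₀, …, x_{cols-1}]`. -/
def inputStateMatrix (L cols : ℕ) (u : ℕ → ι → R) (x : ℕ → n → R) :
    Matrix ((Fin L × ι) ⊕ n) (Fin cols) R :=
  (blockHankel L cols u).fromRows (Matrix.of fun i j => x j i)

/-- The controllability matrix `[B, AB, …, A^{d-1}B]` with `d` blocks, where `d` need not be the
dimension of the state space. -/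
def controllabilityMatrix [Semiring R] [Fintype n] [DecidableEq n] (A : Matrix n n R)
    (B : Matrix n ι R) (d : ℕ) : Matrix n (Fin d × ι) R :=
  Matrix.of fun i q => (A ^ (q.1 : ℕ) * B) i q.2

variable [CommRing R]

section InputFunctional

variable [Fintype ι]

/-- The linear functional on vectors of polynomials that replaces `X ^ t` in component `a` by
`u t a`. It evaluates at time `0` the result of applying polynomials in the time shift to `u`. -/
noncomputable def inputFunctional (u : ℕ → ι → R) : (ι → R[X]) →ₗ[R] R :=
  ∑ a, (lsum fun t => LinearMap.mulRight R (u t a)) ∘ₗ LinearMap.proj a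

theorem inputFunctional_C (u : ℕ → ι → R) (b : ι → R) :
    inputFunctional u (fun a => C (b a)) = b ⬝ᵥ u 0 := by
  simp [inputFunctional, dotProduct]

theorem inputFunctional_X_mul (u : ℕ → ι → R) (g : ι → R[X]) :
    inputFunctional u (fun a => X * g a) = inputFunctional (fun t => u (t + 1)) g := by
  simp only [inputFunctional, LinearMap.sum_apply, LinearMap.comp_apply, LinearMap.proj_apply]
  refine Finset.sum_congr rfl fun a _ => ?_
  induction g a using Polynomial.induction_on' with
  | add f g hf hg => rw [mul_add, map_add, map_add, hf, hg]
  | monomial t c => simp [X_mul_monomial]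

theorem inputFunctional_eq_vecMul_blockHankel {m cols : ℕ} (u : ℕ → ι → R) {g : ι → R[X]}
    (hg : ∀ a, (g a).degree < m) (j : Fin cols) :
    inputFunctional (fun t => u (t + j)) g =
      ((fun q : Fin m × ι => (g q.2).coeff q.1) ᵥ* blockHankel m cols u) j := by
  simp only [inputFunctional, LinearMap.sum_apply, LinearMap.comp_apply, LinearMap.proj_apply,
    lsum_apply, vecMul, dotProduct, Fintype.sum_prod_type_right]
  refine Finset.sum_congr rfl fun a _ => ?_
  rw [← sum_fin _ (by simp) (hg a)]
  rfl

theorem eq_zero_of_inputFunctional_eq_zero {m cols : ℕ} {u : ℕ → ι → R}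
    (hu : LinearIndependent R (blockHankel m cols u).row) {g : ι → R[X]}
    (hg : ∀ a, (g a).degree < m)
    (hzero : ∀ j < cols, inputFunctional (fun t => u (t + j)) g = 0) : g = 0 := by
  have hcoeff := linearIndependent_row_iff_vecMul_eq_zero.mp hu (fun q => (g q.2).coeff q.1) <| by
    ext j
    rw [← inputFunctional_eq_vecMul_blockHankel u hg, hzero j j.2, Pi.zero_apply]
  ext a i
  by_cases hi : i < m
  · exact congrFun hcoeff (⟨i, hi⟩, a)
  · exact coeff_eq_zero_of_degree_lt ((hg a).trans_le (by exact_mod_cast not_lt.mp hi))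

theorem vecMul_inputStateMatrix_apply [Fintype n] [DecidableEq R] {L cols : ℕ} (u : ℕ → ι → R)
    (x : ℕ → n → R) (v : (Fin L × ι) ⊕ n → R) (j : Fin cols) :
    (v ᵥ* inputStateMatrix L cols u x) j =
      inputFunctional (fun t => u (t + j)) (fun a => ofFn L fun i => v (.inl (i, a))) +
        (v ∘ Sum.inr) ⬝ᵥ x j := by
  rw [inputFunctional_eq_vecMul_blockHankel u fun a => ofFn_degree_lt _, inputStateMatrix,
    vecMul_fromRows, Pi.add_apply]
  congr 3
  ext q
  simp

end InputFunctional

variable [Fintype n] [DecidableEq n]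

theorem vecMul_pow_mul_eq_zero {A : Matrix n n R} {B : Matrix n ι R} {ξ : n → R} {p : R[X]}
    (hp : p.Monic) (hpA : aeval A p = 0) (hξ : ∀ k < p.natDegree, ξ ᵥ* (A ^ k * B) = 0) (k : ℕ) :
    ξ ᵥ* (A ^ k * B) = 0 := by
  induction k using Nat.strong_induction_on with
  | _ k ih =>
    obtain hk | hk := lt_or_ge k p.natDegree
    · exact hξ k hk
    obtain ⟨j, rfl⟩ := Nat.exists_eq_add_of_le hk
    have hrec : ∑ i ∈ Finset.range (p.natDegree + 1), p.coeff i • (ξ ᵥ* (A ^ (i + j) * B)) = 0 :=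
      calc ∑ i ∈ Finset.range (p.natDegree + 1), p.coeff i • (ξ ᵥ* (A ^ (i + j) * B))
          = ξ ᵥ* (aeval A p * A ^ j * B) := by
            simp only [aeval_eq_sum_range, Matrix.sum_mul, smul_mul, pow_add, vecMul_sum,
              vecMul_smul]
        _ = 0 := by simp only [hpA, Matrix.zero_mul, vecMul_zero]
    have hlow : ∑ i ∈ Finset.range p.natDegree, p.coeff i • (ξ ᵥ* (A ^ (i + j) * B)) = 0 :=
      Finset.sum_eq_zero fun i hi => by
        rw [ih (i + j) (Nat.add_lt_add_right (Finset.mem_range.mp hi) j), smul_zero]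
    rwa [Finset.sum_range_succ, hlow, zero_add, hp.coeff_natDegree, one_smul] at hrec

/-- The input part of the relation obtained by shifting `η(σ) u + ξ x = 0` in time `k` times along
`x_{t+1} = A x_t + B u_t`; the state part is `ξ Aᵏ`. -/
noncomputable def shiftedInputPart (A : Matrix n n R) (B : Matrix n ι R) (η : ι → R[X])
    (ξ : n → R) : ℕ → ι → R[X]
  | 0 => η
  | k + 1 => fun a => X * shiftedInputPart A B η ξ k a + C ((ξ ᵥ* (A ^ k * B)) a)

section ShiftedInputPart

variable {A : Matrix n n R} {B : Matrix n ι R} {η : ι → R[X]} {ξ : n → R}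

theorem divX_shiftedInputPart_succ (k : ℕ) (a : ι) :
    (shiftedInputPart A B η ξ (k + 1) a).divX = shiftedInputPart A B η ξ k a := by
  ext i
  simp [shiftedInputPart, coeff_divX, coeff_C_succ]

theorem coeff_zero_shiftedInputPart_succ (k : ℕ) (a : ι) :
    (shiftedInputPart A B η ξ (k + 1) a).coeff 0 = (ξ ᵥ* (A ^ k * B)) a := by
  simp [shiftedInputPart]

theorem degree_shiftedInputPart_lt {L : ℕ} (hη : ∀ a, (η a).degree < L) (k : ℕ) (a : ι) :
    (shiftedInputPart A B η ξ k a).degree < (L + k : ℕ) := by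
  induction k with
  | zero => exact hη a
  | succ k ih =>
    rw [degree_lt_iff_coeff_zero] at ih ⊢
    rintro (_ | i) hi
    · omega
    · rw [← coeff_divX, divX_shiftedInputPart_succ]
      exact ih i (by omega)

variable [Fintype ι] {u : ℕ → ι → R} {x : ℕ → n → R}

theorem inputFunctional_shiftedInputPart {T : ℕ}
    (hdyn : ∀ t, t + 1 < T → x (t + 1) = A *ᵥ x t + B *ᵥ u t)
    (hrel : ∀ j < T, inputFunctional (fun t => u (t + j)) η + ξ ⬝ᵥ x j = 0) (k : ℕ) :
    ∀ j, j + k < T →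
      inputFunctional (fun t => u (t + j)) (shiftedInputPart A B η ξ k) +
        (ξ ᵥ* A ^ k) ⬝ᵥ x j = 0 := by
  induction k with
  | zero => simpa [shiftedInputPart] using hrel
  | succ k ih =>
    intro j hj
    have hstate : (ξ ᵥ* A ^ k) ⬝ᵥ x (j + 1) =
        (ξ ᵥ* A ^ (k + 1)) ⬝ᵥ x j + (ξ ᵥ* (A ^ k * B)) ⬝ᵥ u j := by
      rw [hdyn j (by omega), dotProduct_add, dotProduct_mulVec, dotProduct_mulVec, vecMul_vecMul,
        vecMul_vecMul, pow_succ]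
    have hinput : inputFunctional (fun t => u (t + j)) (shiftedInputPart A B η ξ (k + 1)) =
        inputFunctional (fun t => u (t + (j + 1))) (shiftedInputPart A B η ξ k) +
          (ξ ᵥ* (A ^ k * B)) ⬝ᵥ u j := by
      have hsplit : shiftedInputPart A B η ξ (k + 1) =
          (fun a => X * shiftedInputPart A B η ξ k a) + fun a => C ((ξ ᵥ* (A ^ k * B)) a) := rfl
      rw [hsplit, map_add, inputFunctional_X_mul, inputFunctional_C, zero_add]
      simp only [add_right_comm _ 1 j, add_assoc]
    rw [← ih (j + 1) (by omega), hstate, hinput]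
    ring

theorem inputFunctional_sum_coeff_smul_shiftedInputPart {p : R[X]} (hpA : aeval A p = 0) {T : ℕ}
    (hdyn : ∀ t, t + 1 < T → x (t + 1) = A *ᵥ x t + B *ᵥ u t)
    (hrel : ∀ j < T, inputFunctional (fun t => u (t + j)) η + ξ ⬝ᵥ x j = 0)
    {j : ℕ} (hj : j + p.natDegree < T) :
    inputFunctional (fun t => u (t + j))
      (∑ k ∈ Finset.range (p.natDegree + 1), p.coeff k • shiftedInputPart A B η ξ k) = 0 := by
  have hstate : ∑ k ∈ Finset.range (p.natDegree + 1), p.coeff k * (ξ ᵥ* A ^ k) ⬝ᵥ x j = 0 := by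
    calc ∑ k ∈ Finset.range (p.natDegree + 1), p.coeff k * (ξ ᵥ* A ^ k) ⬝ᵥ x j
        = ξ ⬝ᵥ (aeval A p *ᵥ x j) := by
          simp only [aeval_eq_sum_range, sum_mulVec, dotProduct_sum, smul_mulVec, dotProduct_smul,
            dotProduct_mulVec, smul_eq_mul]
      _ = 0 := by rw [hpA, zero_mulVec, dotProduct_zero]
  have hshift : ∀ k ∈ Finset.range (p.natDegree + 1),
      p.coeff k * inputFunctional (fun t => u (t + j)) (shiftedInputPart A B η ξ k) +
        p.coeff k * (ξ ᵥ* A ^ k) ⬝ᵥ x j = 0 := fun k hk => by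
    rw [← mul_add, inputFunctional_shiftedInputPart hdyn hrel k j
      (by have := Finset.mem_range.mp hk; omega), mul_zero]
  have hsum := Finset.sum_eq_zero hshift
  rw [Finset.sum_add_distrib, hstate, add_zero] at hsum
  simpa only [map_sum, map_smul, smul_eq_mul] using hsum

theorem shiftedInputPart_eq_zero {p : R[X]} (hp : p.Monic) (hpA : aeval A p = 0) {L cols : ℕ}
    (hu : LinearIndependent R (blockHankel (L + p.natDegree) cols u).row)
    (hdyn : ∀ t, t + 1 < cols + p.natDegree → x (t + 1) = A *ᵥ x t + B *ᵥ u t)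
    (hη : ∀ a, (η a).degree < L)
    (hrel : ∀ j < cols + p.natDegree,
      inputFunctional (fun t => u (t + j)) η + ξ ⬝ᵥ x j = 0) :
    ∀ k ≤ p.natDegree, shiftedInputPart A B η ξ k = 0 := by
  have hsum : ∑ k ∈ Finset.range (p.natDegree + 1), p.coeff k • shiftedInputPart A B η ξ k = 0 := by
    refine eq_zero_of_inputFunctional_eq_zero hu (fun a => ?_) fun j hj =>
      inputFunctional_sum_coeff_smul_shiftedInputPart hpA hdyn hrel (by omega)
    rw [Finset.sum_apply, ← mem_degreeLT]
    refine Submodule.sum_mem _ fun k hk => Submodule.smul_mem _ _ (mem_degreeLT.mpr ?_)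
    refine (degree_shiftedInputPart_lt hη k a).trans_le (Nat.cast_le.mpr ?_)
    have := Finset.mem_range.mp hk
    omega
  intro k hk
  ext1 a
  refine eq_zero_of_sum_coeff_smul_of_divX_succ (e := fun k => shiftedInputPart A B η ξ k a)
    (fun k => divX_shiftedInputPart_succ k a) hp ?_ k hk
  simpa only [Finset.sum_apply, Pi.smul_apply, Pi.zero_apply] using congrFun hsum a

theorem stmt_3_general {p : R[X]} (hp : p.Monic) (hpA : aeval A p = 0)
    {L m cols : ℕ} (hctrb : LinearIndependent R (controllabilityMatrix A B m).row)
    (hdyn : ∀ t, t + 1 < cols + p.natDegree → x (t + 1) = A *ᵥ x t + B *ᵥ u t)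
    (hpe : LinearIndependent R (blockHankel (L + p.natDegree) cols u).row) :
    LinearIndependent R (inputStateMatrix L (cols + p.natDegree) u x).row := by
  classical
  refine linearIndependent_row_iff_vecMul_eq_zero.mpr fun v hv => ?_
  set η : ι → R[X] := fun a => ofFn L fun i => v (.inl (i, a))
  set ξ : n → R := v ∘ Sum.inr
  have hshift : ∀ k ≤ p.natDegree, shiftedInputPart A B η ξ k = 0 :=
    shiftedInputPart_eq_zero hp hpA hpe hdyn (fun a => ofFn_degree_lt _) fun j hj =>
      (vecMul_inputStateMatrix_apply u x v ⟨j, hj⟩).symm.trans (congrFun hv _)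
  have hη : η = 0 := hshift 0 (Nat.zero_le _)
  have hmarkov : ∀ k < p.natDegree, ξ ᵥ* (A ^ k * B) = 0 := fun k hk => by
    ext a
    rw [← coeff_zero_shiftedInputPart_succ (η := η), hshift (k + 1) hk, Pi.zero_apply, coeff_zero,
      Pi.zero_apply]
  have hξ : ξ = 0 := linearIndependent_row_iff_vecMul_eq_zero.mp hctrb ξ <|
    funext fun q => congrFun (vecMul_pow_mul_eq_zero hp hpA hmarkov q.1) q.2
  ext (⟨i, a⟩ | i)
  · exact congrFun (injective_ofFn L ((congrFun hη a).trans (map_zero _).symm)) i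
  · exact congrFun hξ i

end ShiftedInputPart

end GeneralSystem

/-- For a controllable system driven by an input that is persistently exciting of order
`L + n_x`, the matrix obtained by stacking the order-`L` input Hankel matrix on top of the
row of states has full row rank `n_u·L + n_x`. -/
theorem stmt_3 (nx nu N L : ℕ) (hL : 1 ≤ L) (hN : L + nx ≤ N)
    (A : Matrix (Fin nx) (Fin nx) ℝ) (B : Matrix (Fin nx) (Fin nu) ℝ)
    (hctrb : (ctrbMat A B).rank = nx)
    (us : ℕ → Fin nu → ℝ) (xs : ℕ → Fin nx → ℝ)
    (hdyn : ∀ t, t + 1 < N → xs (t + 1) = A.mulVec (xs t) + B.mulVec (us t))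
    (hpe : persistentlyExciting N (L + nx) us) :
    (Matrix.of fun (r : (Fin L × Fin nu) ⊕ Fin nx) (j : Fin (N - L + 1)) =>
        match r with
        | Sum.inl p => us ((p.1 : ℕ) + (j : ℕ)) p.2
        | Sum.inr i => xs (j : ℕ) i).rank = nu * L + nx := by
  have hdeg : A.charpoly.natDegree = nx := by simp
  have hcols : N - (L + nx) + 1 + nx = N - L + 1 := by omega
  have hpe_row : LinearIndependent ℝ (hankel (L + nx) (N - (L + nx) + 1) us).row :=
    (rank_eq_iff_linearIndependent_row (by simp [mul_comm])).mp hpe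
  have hctrb_row : LinearIndependent ℝ (ctrbMat A B).row :=
    (rank_eq_iff_linearIndependent_row (by simp)).mp hctrb
  have hrow : LinearIndependent ℝ (inputStateMatrix L (N - L + 1) us xs).row := by
    have h := stmt_3_general (L := L) (cols := N - (L + nx) + 1) A.charpoly_monic
      A.aeval_self_charpoly hctrb_row (fun t ht => hdyn t (by omega)) (by rwa [hdeg])
    rwa [hdeg, hcols] at h
  calc Matrix.rank _ = (inputStateMatrix L (N - L + 1) us xs).rank :=
        congrArg Matrix.rank (by ext (_ | _) _ <;> rfl)
    _ = nu * L + nx := (rank_eq_iff_linearIndependent_row (by simp [mul_comm])).mpr hrow
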